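/- Duality bound for integrating a smooth function against a measure through a filter: Let μ be a finite complex Borel measure on 𝕋 = ℝ/2πℤ, let f : 𝕋 → ℂ be smooth (C^∞), and let φ : 𝕋 → ℂ be continuous with Fourier coefficients φ̂(n) = (1/2π)∫_𝕋 φ(θ)e^{−inθ}dθ all nonzero, such that Σ_{n∈ℤ} |f̂(−n)/φ̂(n)|² < ∞, where f̂(n) = (1/2π)∫_𝕋 f(θ)e^{−inθ}dθ. Define (μ∗φ)(θ) = ∫_𝕋 φ(θ − ω) dμ(ω). Then |∫_𝕋 f dμ| ≤ (Σ_{n∈ℤ} |f̂(−n)/φ̂(n)|²)^{1/2} · ((1/2π)∫_𝕋 |(μ∗φ)(θ)|² dθ)^{1/2}. -/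

import Mathlib

open MeasureTheory Real Complex

noncomputable section

/-- The circle `𝕋 = ℝ/2πℤ`. -/
abbrev T2 := AddCircle (2 * Real.pi)

instance : Fact (0 < 2 * Real.pi) := ⟨by positivity⟩

/-!
Write `dμ = f dν`. The Fourier series of `g` converges absolutely, because
`ĝ(-n) = (ĝ(-n) / φ̂(n)) φ̂(n)` is a product of two square-summable sequences. Hence
`∫ g dμ = ∑ ĝ(-n) μ̌(n)`, and since the `n`-th Fourier coefficient of `μ ∗ φ` is `μ̌(n) φ̂(n)`, this
sum pairs `ĝ(-n) / φ̂(n)` with the Fourier coefficients of `μ ∗ φ`. Cauchy–Schwarz and Parseval for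
`μ ∗ φ`, which is in `L²` by Young's inequality, give the bound.
-/

section CauchySchwarz

variable {ι R : Type*} [NormedRing R] {a b : ι → R}

lemma summable_norm_mul_of_summable_sq_norm (ha : Summable fun i => ‖a i‖ ^ 2)
    (hb : Summable fun i => ‖b i‖ ^ 2) : Summable fun i => ‖a i * b i‖ := by
  refine .of_nonneg_of_le (fun _ => norm_nonneg _) (fun i => norm_mul_le (a i) (b i)) ?_
  exact Real.summable_mul_of_Lp_Lq_of_nonneg .two_two (fun _ => norm_nonneg _)
    (fun _ => norm_nonneg _) (by simpa using ha) (by simpa using hb)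

lemma norm_tsum_mul_le_sqrt_mul_sqrt (ha : Summable fun i => ‖a i‖ ^ 2)
    (hb : Summable fun i => ‖b i‖ ^ 2) :
    ‖∑' i, a i * b i‖ ≤ √(∑' i, ‖a i‖ ^ 2) * √(∑' i, ‖b i‖ ^ 2) := by
  obtain ⟨summable_mul, cauchy_schwarz⟩ :=
    Real.summable_and_inner_le_Lp_mul_Lq_tsum_of_nonneg .two_two (fun i => norm_nonneg (a i))
      (fun i => norm_nonneg (b i)) (by simpa using ha) (by simpa using hb)
  simp only [Real.rpow_two, ← Real.sqrt_eq_rpow] at cauchy_schwarz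
  exact (tsum_of_norm_bounded summable_mul.hasSum fun i => norm_mul_le (a i) (b i)).trans
    cauchy_schwarz

end CauchySchwarz

lemma rpow_lintegral_mul_le {α : Type*} [MeasurableSpace α] {μ : Measure α}
    {u v : α → ENNReal} (hu : AEMeasurable u μ) (hv : AEMeasurable v μ) {p : ℝ} (hp : 1 ≤ p) :
    (∫⁻ t, u t * v t ∂μ) ^ p ≤ (∫⁻ t, u t ∂μ) ^ (p - 1) * ∫⁻ t, u t * v t ^ p ∂μ := by
  have hp_pos : 0 < p := one_pos.trans_le hp
  have hp_inv : 0 ≤ p⁻¹ := inv_nonneg.mpr hp_pos.le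
  have hp_one_sub_inv : 0 ≤ 1 - p⁻¹ := sub_nonneg.mpr (inv_le_one_of_one_le₀ hp)
  have factor (t : α) : u t * v t = u t ^ (1 - p⁻¹) * (u t * v t ^ p) ^ p⁻¹ := by
    rw [ENNReal.mul_rpow_of_nonneg _ _ hp_inv, ENNReal.rpow_rpow_inv hp_pos.ne', ← mul_assoc,
      ← ENNReal.rpow_add_of_nonneg _ _ hp_one_sub_inv hp_inv, sub_add_cancel,
      ENNReal.rpow_one]
  calc (∫⁻ t, u t * v t ∂μ) ^ p
      = (∫⁻ t, u t ^ (1 - p⁻¹) * (u t * v t ^ p) ^ p⁻¹ ∂μ) ^ p := by simp only [← factor]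
    _ ≤ ((∫⁻ t, u t ∂μ) ^ (1 - p⁻¹) * (∫⁻ t, u t * v t ^ p ∂μ) ^ p⁻¹) ^ p := by
        gcongr
        exact ENNReal.lintegral_mul_norm_pow_le hu (hu.mul (hv.pow_const p)) hp_one_sub_inv
          hp_inv (sub_add_cancel 1 p⁻¹)
    _ = (∫⁻ t, u t ∂μ) ^ (p - 1) * ∫⁻ t, u t * v t ^ p ∂μ := by
        rw [ENNReal.mul_rpow_of_nonneg _ _ hp_pos.le, ENNReal.rpow_inv_rpow hp_pos.ne',
          ← ENNReal.rpow_mul, sub_mul, one_mul, inv_mul_cancel₀ hp_pos.ne']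

section Convolution

open scoped Convolution ENNReal

variable {𝕜 G E E' F : Type*} [NontriviallyNormedField 𝕜]
  [NormedAddCommGroup E] [NormedSpace 𝕜 E] [NormedAddCommGroup E'] [NormedSpace 𝕜 E']
  [NormedAddCommGroup F] [NormedSpace 𝕜 F] [NormedSpace ℝ F]
  [AddGroup G] [MeasurableSpace G] {μ ν : Measure G} {f : G → E} {φ : G → E'}

lemma enorm_convolution_le (L : E →L[𝕜] E' →L[𝕜] F) (x : G) :
    ‖(f ⋆[L, ν] φ) x‖ₑ ≤ ∫⁻ t, ‖L‖ₑ * ‖f t‖ₑ * ‖φ (x - t)‖ₑ ∂ν :=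
  (enorm_integral_le_lintegral_enorm _).trans <|
    lintegral_mono fun t => L.le_opENorm₂ (f t) (φ (x - t))

variable [MeasurableAdd₂ G] [MeasurableNeg G] [SFinite μ] [μ.IsAddRightInvariant] [SFinite ν]

lemma lintegral_rpow_enorm_convolution_le (L : E →L[𝕜] E' →L[𝕜] F)
    (hf : AEStronglyMeasurable f ν) (hφ : AEStronglyMeasurable φ μ) {p : ℝ} (hp : 1 ≤ p) :
    ∫⁻ x, ‖(f ⋆[L, ν] φ) x‖ₑ ^ p ∂μ ≤
      (∫⁻ t, ‖L‖ₑ * ‖f t‖ₑ ∂ν) ^ p * ∫⁻ x, ‖φ x‖ₑ ^ p ∂μ := by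
  set u : G → ℝ≥0∞ := fun t => ‖L‖ₑ * ‖f t‖ₑ
  have hu : AEMeasurable u ν := hf.enorm.const_mul _
  have hφ_sub : AEStronglyMeasurable (fun z : G × G => φ (z.1 - z.2)) (μ.prod ν) :=
    hφ.comp_quasiMeasurePreserving (quasiMeasurePreserving_sub_of_right_invariant μ ν)
  have pointwise : ∀ᵐ x ∂μ, ‖(f ⋆[L, ν] φ) x‖ₑ ^ p ≤
      (∫⁻ t, u t ∂ν) ^ (p - 1) * ∫⁻ t, u t * ‖φ (x - t)‖ₑ ^ p ∂ν := by
    filter_upwards [hφ_sub.prodMk_left] with x hx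
    exact (ENNReal.rpow_le_rpow (enorm_convolution_le L x) (zero_le_one.trans hp)).trans
      (rpow_lintegral_mul_le hu hx.enorm hp)
  have integrand_aemeasurable :
      AEMeasurable (fun z : G × G => u z.2 * ‖φ (z.1 - z.2)‖ₑ ^ p) (μ.prod ν) :=
    hu.comp_snd.mul (hφ_sub.enorm.pow_const p)
  calc ∫⁻ x, ‖(f ⋆[L, ν] φ) x‖ₑ ^ p ∂μ
      ≤ ∫⁻ x, (∫⁻ t, u t ∂ν) ^ (p - 1) * ∫⁻ t, u t * ‖φ (x - t)‖ₑ ^ p ∂ν ∂μ :=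
        lintegral_mono_ae pointwise
    _ = (∫⁻ t, u t ∂ν) ^ (p - 1) * ∫⁻ t, ∫⁻ x, u t * ‖φ (x - t)‖ₑ ^ p ∂μ ∂ν := by
        rw [lintegral_const_mul'' _ integrand_aemeasurable.lintegral_prod_right',
          lintegral_lintegral_swap integrand_aemeasurable]
    _ = (∫⁻ t, u t ∂ν) ^ (p - 1) * ((∫⁻ t, u t ∂ν) * ∫⁻ x, ‖φ x‖ₑ ^ p ∂μ) := by
        simp only [u, lintegral_const_mul' _ _ (ENNReal.mul_ne_top enorm_ne_top enorm_ne_top),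
          lintegral_sub_right_eq_self (fun x => ‖φ x‖ₑ ^ p)]
        rw [lintegral_mul_const'' _ hu]
    _ = (∫⁻ t, u t ∂ν) ^ p * ∫⁻ x, ‖φ x‖ₑ ^ p ∂μ := by
        rw [← mul_assoc]
        nth_rw 2 [← ENNReal.rpow_one (∫⁻ t, u t ∂ν)]
        rw [← ENNReal.rpow_add_of_nonneg _ _ (sub_nonneg.mpr hp) zero_le_one, sub_add_cancel]

lemma memLp_convolution (L : E →L[𝕜] E' →L[𝕜] F) (hf : Integrable f ν) {p : ℝ≥0∞} (hp : 1 ≤ p)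
    (hp_top : p ≠ ∞) (hφ : MemLp φ p μ) : MemLp (f ⋆[L, ν] φ) p μ := by
  have hp_zero : p ≠ 0 := (one_pos.trans_le hp).ne'
  have one_le_toReal : 1 ≤ p.toReal := by simpa using ENNReal.toReal_mono hp_top hp
  refine ⟨(hf.1.convolution_integrand L hφ.1).integral_prod_right', ?_⟩
  rw [eLpNorm_lt_top_iff_lintegral_rpow_enorm_lt_top hp_zero hp_top]
  refine (lintegral_rpow_enorm_convolution_le L hf.1 hφ.1 one_le_toReal).trans_lt
    (ENNReal.mul_lt_top ?_ ?_)
  · rw [lintegral_const_mul'' _ hf.1.enorm]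
    exact ENNReal.rpow_lt_top_of_nonneg ENNReal.toReal_nonneg
      (ENNReal.mul_ne_top enorm_ne_top hf.2.ne)
  · exact lintegral_rpow_enorm_lt_top_of_eLpNorm_lt_top hp_zero hp_top hφ.2

end Convolution

section AddCircle

open AddCircle ContinuousLinearMap
open scoped Convolution

variable {T : ℝ} {E E' F : Type*}
  [NormedAddCommGroup E] [NormedSpace ℂ E] [NormedAddCommGroup E'] [NormedSpace ℂ E']
  [NormedAddCommGroup F] [NormedSpace ℂ F] {ν : Measure (AddCircle T)}

/-- The Fourier–Stieltjes coefficient `μ̌(n) = ∫ e^{-2πint/T} dμ(t)` of the measure `dμ = f dν` with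
density `f`. No factor `1 / T` is included. -/
def fourierStieltjesCoeff (ν : Measure (AddCircle T)) (f : AddCircle T → E) (n : ℤ) : E :=
  ∫ t, fourier (-n) t • f t ∂ν

lemma norm_fourier_apply (n : ℤ) (t : AddCircle T) : ‖fourier n t‖ = 1 :=
  Circle.norm_coe _

lemma integrable_fourier_smul {f : AddCircle T → E} (hf : Integrable f ν) (n : ℤ) :
    Integrable (fun t => fourier n t • f t) ν :=
  hf.bdd_smul 1 (by fun_prop) (.of_forall fun t => (norm_fourier_apply n t).le)

variable [Fact (0 < T)]

lemma fourierCoeff_comp_sub_right (φ : AddCircle T → E) (n : ℤ) (s : AddCircle T) :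
    fourierCoeff (fun t => φ (t - s)) n = fourier (-n) s • fourierCoeff φ n := by
  have fourier_add_apply (t : AddCircle T) :
      fourier (-n) (t + s) = fourier (-n) s * fourier (-n) t := by
    simp only [fourier_apply, smul_add, toCircle_add, Circle.coe_mul, mul_comm]
  unfold fourierCoeff
  rw [← integral_add_right_eq_self _ s, ← integral_smul]
  simp only [add_sub_cancel_right, fourier_add_apply, mul_smul]

lemma fourierCoeff_convolution [CompleteSpace E] [CompleteSpace E'] [CompleteSpace F] [SFinite ν]
    (L : E →L[ℂ] E' →L[ℂ] F) {f : AddCircle T → E} {φ : AddCircle T → E'}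
    (hf : Integrable f ν) (hφ : Integrable φ haarAddCircle) (n : ℤ) :
    fourierCoeff (f ⋆[L, ν] φ) n = L (fourierStieltjesCoeff ν f n) (fourierCoeff φ n) := by
  have integrable_integrand : Integrable
      (fun p : AddCircle T × AddCircle T => fourier (-n) p.1 • L (f p.2) (φ (p.1 - p.2)))
      (haarAddCircle.prod ν) :=
    (hf.convolution_integrand L hφ).bdd_smul 1 (by fun_prop)
      (.of_forall fun p => (norm_fourier_apply _ p.1).le)
  have inner_integral (s : AddCircle T) :
      ∫ t, fourier (-n) t • L (f s) (φ (t - s)) ∂haarAddCircle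
        = L (fourier (-n) s • f s) (fourierCoeff φ n) := by
    simp only [← map_smul]
    rw [integral_comp_comm _ (integrable_fourier_smul (hφ.comp_sub_right s) (-n)),
      ← fourierCoeff, fourierCoeff_comp_sub_right, map_smul, map_smul, smul_apply]
  calc fourierCoeff (f ⋆[L, ν] φ) n
      = ∫ t, ∫ s, fourier (-n) t • L (f s) (φ (t - s)) ∂ν ∂haarAddCircle := by
        simp only [fourierCoeff, convolution, integral_smul]
    _ = ∫ s, L (fourier (-n) s • f s) (fourierCoeff φ n) ∂ν := by
        rw [integral_integral_swap integrable_integrand]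
        simp only [inner_integral]
    _ = L (fourierStieltjesCoeff ν f n) (fourierCoeff φ n) :=
        (L.flip (fourierCoeff φ n)).integral_comp_comm (integrable_fourier_smul hf (-n))

lemma hasSum_sq_norm_fourierCoeff {h : AddCircle T → ℂ} (hh : MemLp h 2 haarAddCircle) :
    HasSum (fun n => ‖fourierCoeff h n‖ ^ 2) (∫ t, ‖h t‖ ^ 2 ∂haarAddCircle) := by
  have parseval := hasSum_sq_fourierCoeff hh.toLp
  simp only [fourierCoeff_congr_ae hh.coeFn_toLp] at parseval
  rwa [integral_congr_ae (hh.coeFn_toLp.mono fun t ht => by rw [ht])] at parseval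

lemma summable_fourierCoeff_of_summable_sq_norm_div {g φ : AddCircle T → ℂ}
    (hφ : MemLp φ 2 haarAddCircle) (hφn : ∀ n, fourierCoeff φ n ≠ 0)
    (hsum : Summable fun n => ‖fourierCoeff g (-n) / fourierCoeff φ n‖ ^ 2) :
    Summable (fourierCoeff g) := by
  have summable_norm :=
    summable_norm_mul_of_summable_sq_norm hsum (hasSum_sq_norm_fourierCoeff hφ).summable
  simp only [div_mul_cancel₀ _ (hφn _)] at summable_norm
  exact (Equiv.neg ℤ).summable_iff.mp summable_norm.of_norm

lemma hasSum_fourierCoeff_smul_fourierStieltjesCoeff {f : AddCircle T → E}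
    (hf : Integrable f ν) {g : C(AddCircle T, ℂ)} (hg : Summable (fourierCoeff g)) :
    HasSum (fun n => fourierCoeff g (-n) • fourierStieltjesCoeff ν f n) (∫ t, g t • f t ∂ν) := by
  have series_apply (t : AddCircle T) :
      ∑' n, fourierCoeff g n • fourier n t • f t = g t • f t := by
    simpa only [smul_assoc] using
      ((has_pointwise_sum_fourier_series_of_summable hg t).smul_const (f t)).tsum_eq
  have summable_integral_norm :
      Summable fun n => ∫ t, ‖fourierCoeff g n • fourier n t • f t‖ ∂ν := by
    simpa only [norm_smul, norm_fourier_apply, one_mul, integral_const_mul] using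
      hg.norm.mul_right (∫ t, ‖f t‖ ∂ν)
  have hasSum_integral := hasSum_integral_of_summable_integral_norm
    (fun n => (integrable_fourier_smul hf n).smul (fourierCoeff g n)) summable_integral_norm
  simp only [series_apply, Pi.smul_apply, integral_smul] at hasSum_integral
  exact (Equiv.neg ℤ).hasSum_iff.mpr hasSum_integral

theorem duality_bound_filter_general [SFinite ν] {f : AddCircle T → ℂ} (hf : Integrable f ν)
    {g : AddCircle T → ℂ} (hg : Continuous g)
    {φ : AddCircle T → ℂ} (hφ : MemLp φ 2 haarAddCircle) (hφn : ∀ n, fourierCoeff φ n ≠ 0)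
    (hsum : Summable fun n => ‖fourierCoeff g (-n) / fourierCoeff φ n‖ ^ 2) :
    ‖∫ t, g t * f t ∂ν‖ ≤
      √(∑' n, ‖fourierCoeff g (-n) / fourierCoeff φ n‖ ^ 2) *
        √(1 / T * ∫ t, ‖∫ s, φ (t - s) * f s ∂ν‖ ^ 2) := by
  set ψ : AddCircle T → ℂ := fun t => ∫ s, φ (t - s) * f s ∂ν
  have hψ : MemLp ψ 2 haarAddCircle :=
    memLp_convolution (mul ℂ ℂ).flip hf one_le_two ENNReal.ofNat_ne_top hφ
  have fourierCoeff_ψ (n : ℤ) :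
      fourierCoeff ψ n = fourierCoeff φ n * fourierStieltjesCoeff ν f n :=
    fourierCoeff_convolution (mul ℂ ℂ).flip hf (hφ.integrable one_le_two) n
  have pairing : HasSum (fun n => fourierCoeff g (-n) / fourierCoeff φ n * fourierCoeff ψ n)
      (∫ t, g t * f t ∂ν) := by
    simp only [fourierCoeff_ψ, ← mul_assoc, div_mul_cancel₀ _ (hφn _)]
    exact hasSum_fourierCoeff_smul_fourierStieltjesCoeff hf (g := ⟨g, hg⟩)
      (summable_fourierCoeff_of_summable_sq_norm_div hφ hφn hsum)
  have ψ_parseval := hasSum_sq_norm_fourierCoeff hψ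
  rw [one_div, ← smul_eq_mul T⁻¹, ← integral_haarAddCircle, ← ψ_parseval.tsum_eq,
    ← pairing.tsum_eq]
  exact norm_tsum_mul_le_sqrt_mul_sqrt hsum ψ_parseval.summable

end AddCircle

/-- **Duality bound for integrating a smooth function against a measure through a filter.**
The finite complex Borel measure `μ` is represented as `dμ = f dν` with `ν` a finite
nonnegative measure and `f` an integrable complex density, so that `∫ g dμ = ∫ g·f dν`
and `(μ∗φ)(θ) = ∫ φ(θ − ω) f(ω) dν(ω)`. -/
theorem duality_bound_filter
    (ν : Measure T2) [IsFiniteMeasure ν] (f : T2 → ℂ) (hf : Integrable f ν)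
    (g : T2 → ℂ) (hg : ∃ G : ℝ → ℂ, ContDiff ℝ (⊤ : ℕ∞) G ∧ ∀ t : ℝ, g (t : T2) = G t)
    (φ : T2 → ℂ) (hφ : Continuous φ)
    (hφn : ∀ n : ℤ, fourierCoeff φ n ≠ 0)
    (hsum : Summable fun n : ℤ => ‖fourierCoeff g (-n) / fourierCoeff φ n‖ ^ 2) :
    ‖∫ θ : T2, g θ * f θ ∂ν‖ ≤
      Real.sqrt (∑' n : ℤ, ‖fourierCoeff g (-n) / fourierCoeff φ n‖ ^ 2) *
        Real.sqrt ((1 / (2 * π)) * ∫ θ : T2, ‖∫ ω : T2, φ (θ - ω) * f ω ∂ν‖ ^ 2) := by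
  obtain ⟨G, hG, hgG⟩ := hg
  have hg_cont : Continuous g := (QuotientAddGroup.isQuotientMap_mk _).continuous_iff.mpr
    (hG.continuous.congr fun t => (hgG t).symm)
  exact duality_bound_filter_general hf hg_cont
    (hφ.memLp_of_hasCompactSupport (.of_compactSpace φ)) hφn hsum

end
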